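/- arXiv:2101.12733 — 2 statements merged into one kernel-verified Lean document; each statement's English description precedes it below -/
import Mathlib

section
/- For every two finite trees G and H, the following are equivalent: (1) G is isomorphic to H; (2) for every tree T, the number of homomorphisms from T to G equals the number of homomorphisms from T to H; (3) for every tree T, the number of homomorphisms from G to T equals the number of homomorphisms from H to T. -/
open SimpleGraph

/-- Cancelling all fibers but one. -/
lemma fiber_cancel {A B I : Type} [Finite A] [Finite B] [Finite I] (a : A → I) (b : B → I)
    (i₀ : I) (hc : Nat.card A = Nat.card B)
    (h : ∀ i, i ≠ i₀ → Nat.card {x // a x = i} = Nat.card {x // b x = i}) :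
    Nat.card {x // a x = i₀} = Nat.card {x // b x = i₀} := by
  classical
  have := Fintype.ofFinite I
  rw [← Nat.card_congr (Equiv.sigmaFiberEquiv a), ← Nat.card_congr (Equiv.sigmaFiberEquiv b),
    Nat.card_sigma, Nat.card_sigma, ← Finset.add_sum_erase _ _ (Finset.mem_univ i₀),
    ← Finset.add_sum_erase _ _ (Finset.mem_univ i₀)] at hc
  have h2 : ∑ x ∈ Finset.univ.erase i₀, Nat.card {y // a y = x} =
      ∑ x ∈ Finset.univ.erase i₀, Nat.card {y // b y = x} :=
    Finset.sum_congr rfl fun i hi => h i (Finset.ne_of_mem_erase hi)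
  omega

lemma finite_graph_hom {V W : Type} [Finite V] [Finite W] (G : SimpleGraph V)
    (H : SimpleGraph W) : Finite (G →g H) := DFunLike.finite _

/-- A bijective homomorphism between trees is an isomorphism. -/
lemma iso_of_bijective {V W : Type} {G : SimpleGraph V}
    {H : SimpleGraph W} (hG : G.IsTree) (hH : H.IsTree) (f : G →g H)
    (hf : Function.Bijective f) : Nonempty (G ≃g H) := by
  let e := Equiv.ofBijective f hf
  have h1 : (H.comap e).IsTree := (SimpleGraph.Iso.comap e H).isTree_iff.mpr hH
  have hle : G ≤ H.comap e := fun u v h => f.map_adj h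
  have h2 : H.comap e ≤ G := (isTree_iff_minimal_connected.mp h1).2 hG.connected hle
  have h3 : G = H.comap e := le_antisymm hle h2
  rw [h3]
  exact ⟨SimpleGraph.Iso.comap e H⟩

/-- Homomorphisms with range `S` are surjective homomorphisms onto the induced subgraph. -/
def rangeEquiv {V W : Type} (G : SimpleGraph V) (T : SimpleGraph W) (S : Set W) :
    {f : G →g T // Set.range f = S} ≃ {g : G →g T.induce S // Set.range g = Set.univ} where
  toFun f := ⟨⟨fun v => ⟨f.1 v, f.2.subset (Set.mem_range_self v)⟩, fun h => f.1.map_adj h⟩, by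
    obtain ⟨f, rfl⟩ := f
    rw [Set.range_eq_univ]
    rintro ⟨_, v, rfl⟩
    exact ⟨v, rfl⟩⟩
  invFun g := ⟨⟨fun v => (g.1 v).1, fun h => g.1.map_adj h⟩, by
    obtain ⟨g, hg⟩ := g
    rw [Set.range_eq_univ] at hg
    ext w
    constructor
    · rintro ⟨v, rfl⟩
      exact (g v).2
    · intro hw
      obtain ⟨v, hv⟩ := hg ⟨w, hw⟩
      exact ⟨v, congrArg Subtype.val hv⟩⟩
  left_inv f := rfl
  right_inv g := rfl

lemma surj_count {p q : ℕ}
    (G : SimpleGraph (Fin p)) (H : SimpleGraph (Fin q)) (hG : G.IsTree) (hH : H.IsTree)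
    (h : ∀ (k : ℕ) (T : SimpleGraph (Fin k)), T.IsTree →
        Nat.card (G →g T) = Nat.card (H →g T)) (n : ℕ) :
    ∀ (V : Type) [Finite V] (T : SimpleGraph V), Nat.card V = n → T.IsTree →
      Nat.card {f : G →g T // Set.range f = Set.univ} =
        Nat.card {f : H →g T // Set.range f = Set.univ} := by
  induction n using Nat.strong_induction_on with
  | _ n ih =>
  intro V _ T hn hT
  have := Fintype.ofFinite V
  have hfin1 := finite_graph_hom G T
  have hfin2 := finite_graph_hom H T
  refine fiber_cancel (fun f : G →g T => Set.range f) (fun f : H →g T => Set.range f)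
    Set.univ ?_ ?_
  · let e := T.overFinIso rfl
    have := h _ _ (e.isTree_iff.mp hT)
    rw [Nat.card_congr (Equiv.mk (fun f : G →g T => e.toHom.comp f)
      (fun f => e.symm.toHom.comp f) (fun f => by ext; simp) (fun f => by ext; simp)),
      Nat.card_congr (Equiv.mk (fun f : H →g T => e.toHom.comp f)
      (fun f => e.symm.toHom.comp f) (fun f => by ext; simp) (fun f => by ext; simp))]
    exact this
  · intro S hS
    rw [Nat.card_congr (rangeEquiv G T S), Nat.card_congr (rangeEquiv H T S)]
    by_cases hc : (T.induce S).Connected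
    · refine ih (Nat.card S) ?_ S (T.induce S) rfl ⟨hc, hT.isAcyclic.induce S⟩
      rw [← hn]
      have := Set.ncard_lt_ncard (Set.ssubset_univ_iff.mpr hS)
      rwa [Set.ncard_univ] at this
    · have h1 : IsEmpty {g : G →g T.induce S // Set.range g = Set.univ} :=
        ⟨fun g => hc (hG.connected.map g.1 (Set.range_eq_univ.mp g.2))⟩
      have h2 : IsEmpty {g : H →g T.induce S // Set.range g = Set.univ} :=
        ⟨fun g => hc (hH.connected.map g.1 (Set.range_eq_univ.mp g.2))⟩
      simp

/-- The quotient graph by a setoid relating no adjacent vertices. -/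
def quotGraph {V : Type} (T : SimpleGraph V) (s : Setoid V)
    (hs : ∀ u v, T.Adj u v → ¬ s u v) : SimpleGraph (Quotient s) where
  Adj a b := ∃ u v, T.Adj u v ∧ Quotient.mk s u = a ∧ Quotient.mk s v = b
  symm := ⟨by
    rintro _ _ ⟨u, v, h, rfl, rfl⟩
    exact ⟨v, u, h.symm, rfl, rfl⟩⟩
  loopless := ⟨by
    rintro _ ⟨u, v, h, rfl, h2⟩
    exact hs u v h (s.symm (Quotient.exact h2))⟩

def quotHom {V : Type} (T : SimpleGraph V) (s : Setoid V)
    (hs : ∀ u v, T.Adj u v → ¬ s u v) : T →g quotGraph T s hs :=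
  ⟨Quotient.mk s, fun {u v} h => ⟨u, v, h, rfl, rfl⟩⟩

/-- Homomorphisms with kernel `s` are injective homomorphisms from the quotient. -/
def kerEquiv {V W : Type} (T : SimpleGraph V) (G : SimpleGraph W) (s : Setoid V)
    (hs : ∀ u v, T.Adj u v → ¬ s u v) :
    {f : T →g G // Setoid.ker f = s} ≃ {g : quotGraph T s hs →g G // Setoid.ker g = ⊥} where
  toFun f := ⟨⟨Quotient.lift f.1 (fun a b h => by
      obtain ⟨f, rfl⟩ := f
      exact h), by
      rintro _ _ ⟨u, v, h, rfl, rfl⟩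
      exact f.1.map_adj h⟩, by
    obtain ⟨f, rfl⟩ := f
    rw [Setoid.ker_eq_bot_iff]
    intro a b
    induction a using Quotient.inductionOn
    induction b using Quotient.inductionOn
    intro h
    exact Quotient.sound h⟩
  invFun g := ⟨g.1.comp (quotHom T s hs), by
    obtain ⟨g, hg⟩ := g
    rw [Setoid.ker_eq_bot_iff] at hg
    ext u v
    rw [Setoid.ker_def]
    constructor
    · intro h
      exact Quotient.exact (hg h)
    · intro h
      exact congrArg g (Quotient.sound h)⟩
  left_inv f := rfl
  right_inv g := by
    ext a
    induction a using Quotient.inductionOn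
    rfl

lemma inj_count {p q : ℕ}
    (G : SimpleGraph (Fin p)) (H : SimpleGraph (Fin q)) (hG : G.IsTree) (hH : H.IsTree)
    (h : ∀ (k : ℕ) (T : SimpleGraph (Fin k)), T.IsTree →
        Nat.card (T →g G) = Nat.card (T →g H)) (n : ℕ) :
    ∀ (V : Type) [Finite V] (T : SimpleGraph V), Nat.card V = n → T.IsTree →
      Nat.card {f : T →g G // Setoid.ker f = ⊥} =
        Nat.card {f : T →g H // Setoid.ker f = ⊥} := by
  induction n using Nat.strong_induction_on with
  | _ n ih =>
  intro V _ T hn hT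
  have := Fintype.ofFinite V
  have hfin1 := finite_graph_hom T G
  have hfin2 := finite_graph_hom T H
  have : Finite (Setoid V) := Finite.of_injective (fun s : Setoid V => (s.r : V → V → Prop))
    (fun s t h => Setoid.ext fun a b => by
      have := congrFun (congrFun h a) b
      exact iff_of_eq this)
  refine fiber_cancel (fun f : T →g G => Setoid.ker f) (fun f : T →g H => Setoid.ker f)
    ⊥ ?_ ?_
  · let e := T.overFinIso rfl
    have := h _ _ (e.isTree_iff.mp hT)
    rw [Nat.card_congr (Equiv.mk (fun f : T →g G => f.comp e.symm.toHom)
      (fun f => f.comp e.toHom) (fun f => by ext; simp) (fun f => by ext; simp)),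
      Nat.card_congr (Equiv.mk (fun f : T →g H => f.comp e.symm.toHom)
      (fun f => f.comp e.toHom) (fun f => by ext; simp) (fun f => by ext; simp))]
    exact this
  · intro s hS
    by_cases hs : ∀ u v, T.Adj u v → ¬ s u v
    · rw [Nat.card_congr (kerEquiv T G s hs), Nat.card_congr (kerEquiv T H s hs)]
      by_cases hc : (quotGraph T s hs).IsAcyclic
      · refine ih (Nat.card (Quotient s)) ?_ (Quotient s) (quotGraph T s hs) rfl
          ⟨hT.connected.map (quotHom T s hs) Quotient.mk_surjective, hc⟩
        rw [← hn]
        by_contra hlt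
        have hb := (Nat.bijective_iff_surjective_and_card (Quotient.mk s)).mpr
          ⟨Quotient.mk_surjective, le_antisymm (not_lt.mp hlt)
            (Nat.card_le_card_of_surjective _ Quotient.mk_surjective)⟩
        apply hS
        rw [eq_bot_iff]
        intro a b hab
        exact hb.1 (Quotient.sound hab)
      · have h1 : IsEmpty {g : quotGraph T s hs →g G // Setoid.ker g = ⊥} :=
          ⟨fun g => hc (hG.isAcyclic.comap g.1 (Setoid.ker_eq_bot_iff.mp g.2))⟩
        have h2 : IsEmpty {g : quotGraph T s hs →g H // Setoid.ker g = ⊥} :=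
          ⟨fun g => hc (hH.isAcyclic.comap g.1 (Setoid.ker_eq_bot_iff.mp g.2))⟩
        rw [Nat.card_of_isEmpty, Nat.card_of_isEmpty]
    · push Not at hs
      obtain ⟨u, v, huv, hsuv⟩ := hs
      have h1 : IsEmpty {f : T →g G // Setoid.ker f = s} := by
        refine ⟨fun f => ?_⟩
        obtain ⟨f, rfl⟩ := f
        exact (f.map_adj huv).ne hsuv
      have h2 : IsEmpty {f : T →g H // Setoid.ker f = s} := by
        refine ⟨fun f => ?_⟩
        obtain ⟨f, rfl⟩ := f
        exact (f.map_adj huv).ne hsuv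
      simp

lemma exists_of_count {A B : Type} [Finite A] [Nonempty A] (h : Nat.card A = Nat.card B) :
    Nonempty B := by
  have h1 : 0 < Nat.card A := Nat.card_pos
  rw [h] at h1
  exact (Nat.card_pos_iff.mp h1).1

/-- For finite trees `G` and `H`, isomorphism of `G` and `H` is equivalent to equality of their
left-homomorphism counts from every tree, and also to equality of their right-homomorphism counts
into every tree. -/
theorem tree_iso_iff_hom_counts_over_trees {p q : ℕ}
    (G : SimpleGraph (Fin p)) (H : SimpleGraph (Fin q)) (hG : G.IsTree) (hH : H.IsTree) :
    (Nonempty (G ≃g H) ↔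
      ∀ (k : ℕ) (T : SimpleGraph (Fin k)), T.IsTree →
        Nat.card (T →g G) = Nat.card (T →g H)) ∧
    (Nonempty (G ≃g H) ↔
      ∀ (k : ℕ) (T : SimpleGraph (Fin k)), T.IsTree →
        Nat.card (G →g T) = Nat.card (H →g T)) := by
  have := finite_graph_hom G G
  have := finite_graph_hom H H
  refine ⟨⟨?_, ?_⟩, ⟨?_, ?_⟩⟩
  · rintro ⟨e⟩ k T -
    exact Nat.card_congr (Equiv.mk (fun f : T →g G => e.toHom.comp f)
      (fun f => e.symm.toHom.comp f) (fun f => by ext; simp) (fun f => by ext; simp))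
  · intro h
    have : Nonempty {f : G →g G // Setoid.ker f = ⊥} :=
      ⟨⟨Hom.id, Setoid.ker_eq_bot_iff.mpr Function.injective_id⟩⟩
    have : Nonempty {f : H →g H // Setoid.ker f = ⊥} :=
      ⟨⟨Hom.id, Setoid.ker_eq_bot_iff.mpr Function.injective_id⟩⟩
    obtain ⟨f, hf⟩ := exists_of_count (inj_count G H hG hH h _ _ G rfl hG)
    obtain ⟨g, hg⟩ := exists_of_count (inj_count G H hG hH h _ _ H rfl hH).symm
    rw [Setoid.ker_eq_bot_iff] at hf hg
    refine iso_of_bijective hG hH f ((Fintype.bijective_iff_injective_and_card f).mpr ⟨hf, ?_⟩)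
    exact le_antisymm (Fintype.card_le_of_injective f hf) (Fintype.card_le_of_injective g hg)
  · rintro ⟨e⟩ k T -
    exact Nat.card_congr (Equiv.mk (fun f : G →g T => f.comp e.symm.toHom)
      (fun f => f.comp e.toHom) (fun f => by ext; simp) (fun f => by ext; simp))
  · intro h
    have : Nonempty {f : G →g G // Set.range f = Set.univ} :=
      ⟨⟨Hom.id, Set.range_eq_univ.mpr Function.surjective_id⟩⟩
    have : Nonempty {f : H →g H // Set.range f = Set.univ} :=
      ⟨⟨Hom.id, Set.range_eq_univ.mpr Function.surjective_id⟩⟩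
    obtain ⟨g, hg⟩ := exists_of_count (surj_count G H hG hH h _ _ G rfl hG)
    obtain ⟨f, hf⟩ := exists_of_count (surj_count G H hG hH h _ _ H rfl hH).symm
    rw [Set.range_eq_univ] at hf hg
    refine iso_of_bijective hG hH f ((Fintype.bijective_iff_surjective_and_card f).mpr ⟨hf, ?_⟩)
    exact le_antisymm (Fintype.card_le_of_surjective g hg) (Fintype.card_le_of_surjective f hf)
end

section
/- There is no class 𝓕 of finite simple graphs (closed under isomorphism) such that for every two graphs G and H: G and H are cospectral if and only if for every graph F ∈ 𝓕, the number of homomorphisms from G to F equals the number of homomorphisms from H to F. -/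
open SimpleGraph

open Classical in
/-- The rational adjacency matrix of a simple graph. -/
noncomputable def adjMatQ {V : Type*} (G : SimpleGraph V) : Matrix V V ℚ :=
  Matrix.of fun i j => if G.Adj i j then 1 else 0

/-- Two finite simple graphs are cospectral if their adjacency matrices have the same
characteristic polynomial.  (Graphs with different numbers of vertices have characteristic
polynomials of different degrees, hence are not cospectral.) -/
noncomputable def Cospectral {m n : ℕ} (G : SimpleGraph (Fin m)) (H : SimpleGraph (Fin n)) :
    Prop :=
  (adjMatQ G).charpoly = (adjMatQ H).charpoly

/-- Complete bipartite graph between `S` and `T`, plus isolated vertices. -/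
def biGraph {N : ℕ} (S T : Finset (Fin N)) (h : Disjoint S T) : SimpleGraph (Fin N) where
  Adj i j := (i ∈ S ∧ j ∈ T) ∨ (i ∈ T ∧ j ∈ S)
  symm := ⟨fun i j hij => by tauto⟩
  loopless := ⟨fun i hi => by
    have : i ∈ S → i ∉ T := fun hi => Finset.disjoint_left.1 h hi
    tauto⟩

open Polynomial in
theorem biGraph_charpoly {N : ℕ} (S T : Finset (Fin N)) (h : Disjoint S T) :
    (X : ℚ[X]) ^ 2 * (adjMatQ (biGraph S T h)).charpoly
      = X ^ N * (X ^ 2 - C ((S.card : ℚ) * T.card)) := by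
  let s : Fin N → ℚ := fun i => if i ∈ S then 1 else 0
  let t : Fin N → ℚ := fun i => if i ∈ T then 1 else 0
  let U : Matrix (Fin N) (Fin 2) ℚ := Matrix.of fun i => ![s i, t i]
  let W : Matrix (Fin 2) (Fin N) ℚ := Matrix.of ![t, s]
  have hd : ∀ i, i ∈ S → i ∉ T := fun i hi => Finset.disjoint_left.1 h hi
  have hA : adjMatQ (biGraph S T h) = U * W := by
    ext i j
    have h1 := hd i
    have h2 := hd j
    simp only [adjMatQ, Matrix.of_apply, biGraph, Matrix.mul_apply, Fin.sum_univ_two, U, W, s, t]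
    by_cases hi : i ∈ S <;> by_cases hj : j ∈ S <;> by_cases hi' : i ∈ T <;>
      by_cases hj' : j ∈ T <;> simp_all
  have hst : ∀ i, s i * t i = 0 := by
    intro i
    have := hd i
    simp only [s, t]
    by_cases hi : i ∈ S <;> simp_all
  have hB : W * U = !![0, (T.card : ℚ); (S.card : ℚ), 0] := by
    ext a b
    fin_cases a <;> fin_cases b
    · simp [Matrix.mul_apply, U, W, mul_comm (t _), hst]
    · simp [Matrix.mul_apply, U, W, t]
    · simp [Matrix.mul_apply, U, W, s]
    · simp [Matrix.mul_apply, U, W, hst]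
  have := Matrix.charpoly_mul_comm' U W
  rw [← hA, hB, Matrix.charpoly_fin_two] at this
  simp [Matrix.trace_fin_two, Matrix.det_fin_two] at this
  rw [this]
  simp
  ring

def starG (c : ℕ) : SimpleGraph (Fin (2 * c + 2 + 1)) :=
  biGraph {0} (Finset.univ.erase 0) (by simp)

theorem disjH (c : ℕ) : Disjoint (Finset.univ.filter fun i : Fin (2 * c + 2 + 1) => (i : ℕ) < 2)
    (Finset.univ.filter fun i : Fin (2 * c + 2 + 1) => 2 ≤ (i : ℕ) ∧ (i : ℕ) < c + 3) := by
  rw [Finset.disjoint_left]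
  intro i
  simp
  omega

def twoG (c : ℕ) : SimpleGraph (Fin (2 * c + 2 + 1)) := biGraph _ _ (disjH c)

theorem cospec (c : ℕ) : Cospectral (starG c) (twoG c) := by
  have h1 := biGraph_charpoly ({0} : Finset (Fin (2 * c + 2 + 1))) (Finset.univ.erase 0) (by simp)
  have h2 := biGraph_charpoly _ _ (disjH c)
  have c1 : (Finset.univ.filter fun i : Fin (2 * c + 2 + 1) => (i : ℕ) < 2).card = 2 := by
    rw [Fin.card_filter_val_lt]; omega
  have c2 : (Finset.univ.filter fun i : Fin (2 * c + 2 + 1) =>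
      2 ≤ (i : ℕ) ∧ (i : ℕ) < c + 3).card = c + 1 := by
    have : (Finset.univ.filter fun i : Fin (2 * c + 2 + 1) =>
      2 ≤ (i : ℕ) ∧ (i : ℕ) < c + 3).map Fin.valEmbedding = Finset.Ico 2 (c + 3) := by
      ext x
      simp only [Finset.mem_map, Finset.mem_filter, Finset.mem_univ, true_and, Finset.mem_Ico,
        Fin.valEmbedding_apply]
      constructor
      · rintro ⟨a, h, rfl⟩
        exact h
      · intro h
        exact ⟨⟨x, by omega⟩, h, rfl⟩
    rw [← Finset.card_map Fin.valEmbedding, this, Nat.card_Ico]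
    omega
  rw [c1, c2] at h2
  rw [Finset.card_erase_of_mem (Finset.mem_univ _), Finset.card_singleton, Finset.card_univ,
    Fintype.card_fin] at h1
  have hX : (Polynomial.X : Polynomial ℚ) ^ 2 ≠ 0 := pow_ne_zero _ Polynomial.X_ne_zero
  apply mul_left_cancel₀ hX
  unfold starG twoG
  rw [h1, h2]
  congr 3
  push_cast [Nat.add_sub_cancel]
  ring

open Classical in
theorem star_le {k c : ℕ} (F : SimpleGraph (Fin k)) (D : ℕ) (hD : ∀ v, F.degree v ≤ D) :
    Nat.card (starG c →g F) ≤ k * D ^ (2 * c + 2) := by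
  let φ : (starG c →g F) → Σ v : Fin k, (Fin (2 * c + 2) → F.neighborSet v) := fun f =>
    ⟨f 0, fun i => ⟨f i.succ, f.map_rel (by
      show (starG c).Adj 0 i.succ
      simp [starG, biGraph])⟩⟩
  have hφ : Function.Injective φ := by
    intro f g hfg
    let ψ : (Σ v : Fin k, (Fin (2 * c + 2) → F.neighborSet v)) → Fin (2 * c + 2 + 1) → Fin k :=
      fun x => Fin.cons x.1 (fun i => (x.2 i : Fin k))
    have h : ψ (φ f) = ψ (φ g) := by rw [hfg]
    have e : ∀ f, ψ (φ f) = f := by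
      intro f
      funext i
      refine Fin.cases ?_ (fun i => ?_) i <;> simp [ψ, φ]
    rw [e, e] at h
    exact DFunLike.coe_injective h
  calc Nat.card (starG c →g F) ≤ Nat.card (Σ v : Fin k, (Fin (2 * c + 2) → F.neighborSet v)) :=
        Nat.card_le_card_of_injective φ hφ
    _ = ∑ v : Fin k, F.degree v ^ (2 * c + 2) := by
        rw [Nat.card_eq_fintype_card, Fintype.card_sigma]
        simp only [Fintype.card_fun, F.card_neighborSet_eq_degree, Fintype.card_fin]
    _ ≤ ∑ v : Fin k, D ^ (2 * c + 2) := Finset.sum_le_sum fun v _ => Nat.pow_le_pow_left (hD v) _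
    _ = _ := by simp

open Classical in
theorem two_ge {k c : ℕ} (F : SimpleGraph (Fin k)) (v : Fin k) :
    F.degree v ^ (c + 1) * k ^ c ≤ Nat.card (twoG c →g F) := by
  let φ : (Fin (c + 1) → F.neighborSet v) × (Fin c → Fin k) → (twoG c →g F) := fun g =>
    { toFun := fun i => if h : (i : ℕ) < 2 then v else
        if h' : (i : ℕ) < c + 3 then (g.1 ⟨i - 2, by omega⟩ : Fin k) else
          g.2 ⟨i - (c + 3), by omega⟩
      map_rel' := by
        intro i j hij
        simp only [twoG, biGraph, Finset.mem_filter, Finset.mem_univ, true_and] at hij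
        rcases hij with ⟨h1, h2, h3⟩ | ⟨⟨h2, h3⟩, h1⟩
        · rw [dif_pos h1, dif_neg (by omega), dif_pos h3]
          exact (g.1 _).2
        · rw [dif_pos h1, dif_neg (by omega), dif_pos h3]
          exact F.adj_symm (g.1 _).2 }
  have hap : ∀ g i, φ g i = if h : (i : ℕ) < 2 then v else
        if h' : (i : ℕ) < c + 3 then (g.1 ⟨i - 2, by omega⟩ : Fin k) else
          g.2 ⟨i - (c + 3), by omega⟩ := fun _ _ => rfl
  have hφ : Function.Injective φ := by
    intro g g' hg
    have hh : ∀ i, φ g i = φ g' i := fun i => by rw [hg]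
    ext i
    · have := hh ⟨i + 2, by omega⟩
      have e : ∀ g, φ g ⟨i + 2, by omega⟩ = (g.1 i : Fin k) := by
        intro g
        have h1 : ¬ ((i : ℕ) + 2 < 2) := by omega
        have h2 : (i : ℕ) + 2 < c + 3 := by omega
        rw [hap, dif_neg h1, dif_pos h2]
        rfl
      rw [e, e] at this
      rw [this]
    · have := hh ⟨i + (c + 3), by omega⟩
      have e : ∀ g, φ g ⟨i + (c + 3), by omega⟩ = g.2 i := by
        intro g
        have h1 : ¬ ((i : ℕ) + (c + 3) < 2) := by omega
        have h2 : ¬ ((i : ℕ) + (c + 3) < c + 3) := by omega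
        rw [hap, dif_neg h1, dif_neg h2]
        congr 1
        ext
        simp
      rw [e, e] at this
      rw [this]
  have : Finite (twoG c →g F) := Finite.of_injective _ DFunLike.coe_injective
  have := Nat.card_le_card_of_injective φ hφ
  rw [Nat.card_eq_fintype_card, Fintype.card_prod] at this
  simpa only [Fintype.card_fun, F.card_neighborSet_eq_degree, Fintype.card_fin] using this

open Classical in
theorem edge_contra {k : ℕ} (F : SimpleGraph (Fin k)) (a b : Fin k) (hab : F.Adj a b) :
    ∃ c, Nat.card (starG c →g F) ≠ Nat.card (twoG c →g F) := by
  obtain ⟨v, -, hv⟩ := Finset.exists_max_image Finset.univ (fun v => F.degree v) ⟨a, by simp⟩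
  have hpos : 0 < F.degree v :=
    lt_of_lt_of_le ((F.degree_pos_iff_exists_adj a).2 ⟨b, hab⟩) (hv a (by simp))
  have hlt : F.degree v < k := by simpa using F.degree_lt_card_verts v
  have hk : 0 < k := by omega
  set d := F.degree v with hd
  obtain ⟨c, hc⟩ : ∃ c : ℕ, k * k * d ^ c < k ^ c := by
    have hkq : (0 : ℚ) < k := by exact_mod_cast hk
    obtain ⟨c, hc⟩ := exists_pow_lt_of_lt_one (show (0 : ℚ) < 1 / (k * k) by positivity)
      (show (d : ℚ) / k < 1 by rw [div_lt_one hkq]; exact_mod_cast hlt)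
    refine ⟨c, ?_⟩
    rw [div_pow, div_lt_div_iff₀ (by positivity) (by positivity)] at hc
    have : ((k * k * d ^ c : ℕ) : ℚ) < (k ^ c : ℕ) := by push_cast; linarith
    exact_mod_cast this
  refine ⟨c, fun heq => ?_⟩
  have h1 := star_le (c := c) F d (fun w => hv w (by simp))
  have h2 := two_ge (c := c) F v
  rw [heq] at h1
  have h3 := h2.trans h1
  rw [← hd] at h3
  have h4 : d ^ (c + 1) * k ^ c ≤ d ^ (c + 1) * (k * d ^ (c + 1)) := by
    calc _ ≤ _ := h3
      _ = _ := by ring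
  have h5 := Nat.le_of_mul_le_mul_left h4 (by positivity)
  have h6 : k * d ^ (c + 1) ≤ k * k * d ^ c := by
    calc k * d ^ (c + 1) = k * d * d ^ c := by ring
      _ ≤ k * k * d ^ c := by gcongr
  omega

/-- There is no class `𝓕` of finite simple graphs (non-empty, closed under isomorphism) such that
two graphs are cospectral exactly when their right-homomorphism counts into every member of `𝓕`
agree. -/
theorem no_class_captures_cospectrality :
    ¬ ∃ 𝓕 : ∀ n : ℕ, Set (SimpleGraph (Fin n)),
      (∃ (n : ℕ) (G : SimpleGraph (Fin n)), G ∈ 𝓕 n) ∧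
      (∀ (m n : ℕ) (G : SimpleGraph (Fin m)) (H : SimpleGraph (Fin n)),
        G ∈ 𝓕 m → Nonempty (G ≃g H) → H ∈ 𝓕 n) ∧
      (∀ (m n : ℕ) (G : SimpleGraph (Fin m)) (H : SimpleGraph (Fin n)),
        Cospectral G H ↔
          ∀ (k : ℕ) (F : SimpleGraph (Fin k)), F ∈ 𝓕 k →
            Nat.card (G →g F) = Nat.card (H →g F)) := by
  rintro ⟨P, -, -, h⟩
  have hno : ∀ (k : ℕ) (F : SimpleGraph (Fin k)), F ∈ P k → ∀ a b, ¬ F.Adj a b := by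
    intro k F hF a b hab
    obtain ⟨c, hc⟩ := edge_contra F a b hab
    exact hc ((h _ _ _ _).1 (cospec c) k F hF)
  have hc : Cospectral (⊤ : SimpleGraph (Fin 2)) (⊤ : SimpleGraph (Fin 3)) := by
    rw [h]
    intro k F hF
    have e2 : IsEmpty ((⊤ : SimpleGraph (Fin 2)) →g F) :=
      ⟨fun f => hno k F hF _ _ (f.map_rel (show (⊤ : SimpleGraph (Fin 2)).Adj 0 1 by simp))⟩
    have e3 : IsEmpty ((⊤ : SimpleGraph (Fin 3)) →g F) :=
      ⟨fun f => hno k F hF _ _ (f.map_rel (show (⊤ : SimpleGraph (Fin 3)).Adj 0 1 by simp))⟩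
    simp
  have := congrArg Polynomial.natDegree hc
  rw [Matrix.charpoly_natDegree_eq_dim, Matrix.charpoly_natDegree_eq_dim] at this
  simp at this
end
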